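/- arXiv:2508.01041 — 3 statements merged into one kernel-verified Lean document; each statement's English description precedes it below -/
import Mathlib

section
/- Let (X,d) be a path-connected metric space with basepoint x₀. Then the following two statements are equivalent: (a) there exists 1 ≠ [α] ∈ π₁(X,x₀) such that for every ε > 0 there is a null-homotopic loop α′ : ([0,1],{0,1}) → (X,x₀) with d(α(t),α′(t)) < ε for all t ∈ [0,1]; (b) π₁(X,x₀) fails to be a T₁ space in the quotient topology induced by the compact-open topology on the loop space Ω(X,x₀). -/
open scoped unitInterval

noncomputable section

/-- The quotient topology on `π₁`, induced by the compact-open topology on the loop space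
(the topology on `Path x y` is the one induced by the compact-open topology on `C(I,X)`). -/
instance {X : Type*} [TopologicalSpace X] (x y : X) :
    TopologicalSpace (Path.Homotopic.Quotient x y) :=
  instTopologicalSpaceQuotient

/-!
Right translations of homotopy classes are continuous, so a single closed point makes every point
closed: `π₁(X, x₀)` is T₁ if and only if the null-homotopic loops form a closed subset of the loop
space. Since `[0, 1]` is compact, the compact-open topology is that of uniform convergence, and
the failure of closedness is the existence of an essential uniform limit of null-homotopic loops.
-/

open Filter Topology
open scoped Uniformity

section HomotopyClasses

variable {X : Type*} [TopologicalSpace X] {x y z : X}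

theorem isQuotientMap_homotopyClass_mk :
    IsQuotientMap (Path.Homotopic.Quotient.mk : Path x y → Path.Homotopic.Quotient x y) :=
  isQuotientMap_quot_mk

theorem isClosed_singleton_homotopyClass_mk_iff {γ₀ : Path x y} :
    IsClosed {Path.Homotopic.Quotient.mk γ₀} ↔ IsClosed {γ : Path x y | γ.Homotopic γ₀} := by
  have preimage_mk : Path.Homotopic.Quotient.mk ⁻¹' {Path.Homotopic.Quotient.mk γ₀} =
      {γ : Path x y | γ.Homotopic γ₀} := Set.ext fun _ ↦ Path.Homotopic.Quotient.eq
  rw [← preimage_mk, isQuotientMap_homotopyClass_mk.isClosed_preimage]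

theorem continuous_homotopyClass_trans_right (q : Path.Homotopic.Quotient y z) :
    Continuous fun p : Path.Homotopic.Quotient x y ↦ p.trans q := by
  induction q with | mk δ =>
  have continuous_trans_δ : Continuous fun γ : Path x y ↦ γ.trans δ := by fun_prop
  exact isQuotientMap_homotopyClass_mk.continuous_iff.2
    (isQuotientMap_homotopyClass_mk.continuous.comp continuous_trans_δ)

theorem injective_homotopyClass_trans_right (q : Path.Homotopic.Quotient y z) :
    Function.Injective fun p : Path.Homotopic.Quotient x y ↦ p.trans q :=
  Function.LeftInverse.injective (g := fun r ↦ r.trans q.symm) fun p ↦ by simp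

theorem t1Space_homotopyClass_iff_isClosed_singleton (q₀ : Path.Homotopic.Quotient x y) :
    T1Space (Path.Homotopic.Quotient x y) ↔ IsClosed {q₀} := by
  refine ⟨fun _ ↦ isClosed_singleton, fun closed_q₀ ↦ ⟨fun q ↦ ?_⟩⟩
  let translate (p : Path.Homotopic.Quotient x y) := p.trans (q.symm.trans q₀)
  have translate_q : translate q = q₀ := by
    simp only [translate, ← Path.Homotopic.Quotient.trans_assoc,
      Path.Homotopic.Quotient.trans_symm, Path.Homotopic.Quotient.refl_trans]
  have preimage_q₀ : translate ⁻¹' {q₀} = {q} := by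
    rw [← translate_q, ← Set.image_singleton,
      Set.preimage_image_eq _ (injective_homotopyClass_trans_right _)]
  rw [← preimage_q₀]
  exact closed_q₀.preimage (continuous_homotopyClass_trans_right _)

end HomotopyClasses

section UniformSpace

variable {X ι : Type*} [UniformSpace X] {x y : X} {p : ι → Prop} {V : ι → Set (X × X)}

theorem hasBasis_nhds_path (hV : (𝓤 X).HasBasis p V) (γ : Path x y) :
    (𝓝 γ).HasBasis p fun i ↦ {γ' : Path x y | ∀ t, (γ t, γ' t) ∈ V i} := by
  rw [nhds_induced]
  exact (nhds_basis_uniformity' hV.compactConvergenceUniformity_of_compact).comap _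

theorem statement2_general (hV : (𝓤 X).HasBasis p V) (γ₀ : Path x y) :
    (∃ α : Path x y, ¬ α.Homotopic γ₀ ∧
      ∀ i, p i → ∃ α' : Path x y, α'.Homotopic γ₀ ∧ ∀ t, (α t, α' t) ∈ V i) ↔
    ¬ T1Space (Path.Homotopic.Quotient x y) := by
  have mem_closure_class_iff (α : Path x y) : α ∈ closure {γ : Path x y | γ.Homotopic γ₀} ↔
      ∀ i, p i → ∃ α' : Path x y, α'.Homotopic γ₀ ∧ ∀ t, (α t, α' t) ∈ V i :=
    mem_closure_iff_nhds_basis (hasBasis_nhds_path hV α)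
  rw [t1Space_homotopyClass_iff_isClosed_singleton (.mk γ₀),
    isClosed_singleton_homotopyClass_mk_iff, ← closure_subset_iff_isClosed, Set.not_subset]
  simp only [mem_closure_class_iff, Set.mem_ofPred_eq, and_comm]

end UniformSpace

/-- For a path-connected metric space `(X,d)` with basepoint `x₀`, the
following are equivalent: (a) there is an essential loop `α` at `x₀` that can be uniformly
approximated, to every `ε > 0`, by null-homotopic loops at `x₀`; (b) the fundamental group
`π₁(X,x₀)`, with the quotient topology induced by the compact-open topology on the loop
space `Ω(X,x₀)`, fails to be T₁. -/
theorem statement2 {X : Type*} [MetricSpace X] [PathConnectedSpace X] (x₀ : X) :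
    (∃ α : Path x₀ x₀, ¬ α.Homotopic (Path.refl x₀) ∧
      ∀ ε > (0:ℝ), ∃ α' : Path x₀ x₀, α'.Homotopic (Path.refl x₀) ∧
        ∀ t : I, dist (α t) (α' t) < ε) ↔
    ¬ T1Space (Path.Homotopic.Quotient x₀ x₀) :=
  statement2_general Metric.uniformity_basis_dist (Path.refl x₀)

end
end

section
/- Let α : [0,1] → 𝔻 be a nonconstant path. If β₁, β₂ : [0,1] → 𝔻 are paths with f ∘ β₁ = α and f ∘ β₂ = α, where f is the shift map, then β₁ = β₂. -/
open scoped unitInterval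

noncomputable section

/-- The base segment `B = [0,1] × {0}` of the dyadic arc space. -/
def B2 : Set (ℝ × ℝ) := {p | p.1 ∈ Set.Icc (0:ℝ) 1 ∧ p.2 = 0}

/-- The upper semicircle `𝔻_{n,j}` with center `((2j-1)/2ⁿ, 0)` and radius `1/2ⁿ`. -/
def Dnj (n j : ℕ) : Set (ℝ × ℝ) :=
  {p | (p.1 - (2*(j:ℝ)-1)/2^n)^2 + p.2^2 = (1/2^n)^2 ∧ 0 ≤ p.2}

/-- The dyadic arc space `𝔻 ⊆ ℝ²`. -/
def Dspace : Set (ℝ × ℝ) :=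
  B2 ∪ ⋃ (n : ℕ) (_ : 1 ≤ n) (j : ℕ) (_ : 1 ≤ j) (_ : j ≤ 2^(n-1)), Dnj n j

/-- The dyadic arc space as a topological space. -/
abbrev DD : Type := ↥Dspace

/-- The basepoint `d₀ = (0,0)` of `𝔻`. -/
def d0 : DD := ⟨((0:ℝ), (0:ℝ)), Or.inl ⟨⟨le_refl _, zero_le_one⟩, rfl⟩⟩

theorem d0_mem_B : ((d0 : DD) : ℝ × ℝ) ∈ B2 := ⟨⟨le_refl _, zero_le_one⟩, rfl⟩

/-- Characterization of the shift map `f : 𝔻 → 𝔻`: it fixes `B` pointwise, and it maps each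
point of `𝔻_{n,j}` to the point of `𝔻_{n+1,2j-1} ∪ 𝔻_{n+1,2j}` with the same first
coordinate (and nonnegative second coordinate). -/
def IsShiftMap (f : DD → DD) : Prop :=
  (∀ p : DD, (p : ℝ × ℝ) ∈ B2 → f p = p) ∧
  ∀ n j : ℕ, 1 ≤ n → 1 ≤ j → j ≤ 2^(n-1) → ∀ p : DD, (p : ℝ × ℝ) ∈ Dnj n j →
    ((f p : ℝ × ℝ).1 = (p : ℝ × ℝ).1 ∧
      ((f p : ℝ × ℝ) ∈ Dnj (n+1) (2*j-1) ∪ Dnj (n+1) (2*j)))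

/-!
Above `x`, the arc of level `n + 1` has height `arcHeight n x`, and the shift map lowers a point
from one level to the next over the same `x`. Doubling the frequency and halving the diameter at
least halves the squared height, so over a fixed `x` the heights decrease strictly until they reach
`0`, which happens exactly over dyadic `x`. Hence the shift map is injective on the base and on its
complement, and the only points with two preimages are the dyadic points of the base, of which there
are countably many. Where two lifts of a path differ, the path runs through this totally
disconnected set, so it is locally constant there; finiteness of the fibres makes the set of times
at which the lifts differ and the path takes a given value closed as well as open.
-/

section Lifting

variable {X Y : Type*} {f : X → Y} {s : Set X}

theorem finite_preimage_singleton_of_injOn_of_injOn_compl (hs : Set.InjOn f s)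
    (hsc : Set.InjOn f sᶜ) (y : Y) : (f ⁻¹' {y}).Finite := by
  have subsingleton_inter {u : Set X} (hu : Set.InjOn f u) : (f ⁻¹' {y} ∩ u).Subsingleton :=
    fun _ hp _ hq => hu hp.2 hq.2 (hp.1.trans hq.1.symm)
  rw [← Set.inter_union_compl (f ⁻¹' {y}) s]
  exact (subsingleton_inter hs).finite.union (subsingleton_inter hsc).finite

theorem mem_image_inter_image_compl_of_nontrivial_preimage (hs : Set.InjOn f s)
    (hsc : Set.InjOn f sᶜ) {y : Y} (hy : (f ⁻¹' {y}).Nontrivial) : y ∈ f '' s ∩ f '' sᶜ := by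
  obtain ⟨p, hp, q, hq, hpq⟩ := hy
  have hfpq : f p = f q := hp.trans hq.symm
  by_cases hps : p ∈ s <;> by_cases hqs : q ∈ s
  · exact absurd (hs hps hqs hfpq) hpq
  · exact ⟨⟨p, hps, hp⟩, ⟨q, hqs, hq⟩⟩
  · exact ⟨⟨q, hqs, hq⟩, ⟨p, hps, hp⟩⟩
  · exact absurd (hsc hps hqs hfpq) hpq

variable {T : Type*} [TopologicalSpace T] [TopologicalSpace Y]

theorem eventually_eq_of_mapsTo_isTotallyDisconnected [LocallyConnectedSpace T] {α : T → Y}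
    {U : Set T} {D : Set Y} (hα : ContinuousOn α U) (hUD : Set.MapsTo α U D)
    (hD : IsTotallyDisconnected D) {t : T} (hU : U ∈ nhds t) : ∀ᶠ s in nhds t, α s = α t := by
  have hsub : connectedComponentIn U t ⊆ U := connectedComponentIn_subset U t
  have himage : (α '' connectedComponentIn U t).Subsingleton :=
    hD _ (hUD.mono_left hsub).image_subset
      (isPreconnected_connectedComponentIn.image _ (hα.mono hsub))
  filter_upwards [connectedComponentIn_mem_nhds hU] with s hs
  exact himage (Set.mem_image_of_mem α hs)
    (Set.mem_image_of_mem α (mem_connectedComponentIn (mem_of_mem_nhds hU)))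

theorem lift_unique_of_isTotallyDisconnected [TopologicalSpace X] [T2Space X] [PreconnectedSpace T]
    [LocallyConnectedSpace T] (hfin : ∀ y, (f ⁻¹' {y}).Finite)
    (hbranch : IsTotallyDisconnected {y | (f ⁻¹' {y}).Nontrivial}) {α : T → Y}
    (hα : Continuous α) (hnc : ¬ ∃ c, ∀ t, α t = c) {β₁ β₂ : T → X} (hβ₁ : Continuous β₁)
    (hβ₂ : Continuous β₂) (h₁ : ∀ t, f (β₁ t) = α t) (h₂ : ∀ t, f (β₂ t) = α t) :
    β₁ = β₂ := by
  by_contra hne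
  obtain ⟨t₀, ht₀⟩ := Function.ne_iff.1 hne
  let U : Set T := {t | β₁ t ≠ β₂ t}
  have hU : IsOpen U := isOpen_ne_fun hβ₁ hβ₂
  have hUD : Set.MapsTo α U {y | (f ⁻¹' {y}).Nontrivial} :=
    fun t ht => ⟨β₁ t, h₁ t, β₂ t, h₂ t, ht⟩
  let W : Set T := {t | (β₁ t, β₂ t) ∈ (f ⁻¹' {α t₀}).offDiag}
  have mem_W {t : T} : t ∈ W ↔ t ∈ U ∧ α t = α t₀ := by
    simp only [W, U, Set.mem_ofPred_eq, Set.mem_offDiag, Set.mem_preimage, Set.mem_singleton_iff,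
      h₁, h₂]
    tauto
  have hW_closed : IsClosed W :=
    (hfin (α t₀)).offDiag.isClosed.preimage (hβ₁.prodMk hβ₂)
  have hW_open : IsOpen W := by
    refine isOpen_iff_mem_nhds.2 fun t ht => ?_
    obtain ⟨htU, htα⟩ := mem_W.1 ht
    have hU_nhds : U ∈ nhds t := hU.mem_nhds htU
    have hα_nhds : ∀ᶠ s in nhds t, α s = α t :=
      eventually_eq_of_mapsTo_isTotallyDisconnected hα.continuousOn hUD hbranch hU_nhds
    filter_upwards [hU_nhds, hα_nhds] with s hsU hsα
    exact mem_W.2 ⟨hsU, hsα.trans htα⟩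
  have hW_univ : W = Set.univ :=
    IsClopen.eq_univ ⟨hW_closed, hW_open⟩ ⟨t₀, mem_W.2 ⟨ht₀, rfl⟩⟩
  exact hnc ⟨α t₀, fun t => (mem_W.1 (hW_univ ▸ Set.mem_univ t)).2⟩

end Lifting

/-- The square of the height above `u` of the semicircle with diameter `[k, k + 1]`, where
`k = ⌊u⌋`. -/
def arcProfile (u : ℝ) : ℝ := Int.fract u * (1 - Int.fract u)

theorem arcProfile_nonneg (u : ℝ) : 0 ≤ arcProfile u :=
  mul_nonneg (Int.fract_nonneg u) (sub_nonneg.2 (Int.fract_lt_one u).le)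

theorem arcProfile_eq_of_mem_Icc {u : ℝ} {k : ℤ} (hu : u ∈ Set.Icc (k : ℝ) (k + 1)) :
    arcProfile u = (u - k) * (k + 1 - u) := by
  obtain hlt | rfl := hu.2.lt_or_eq
  · rw [arcProfile, ← Int.self_sub_floor, Int.floor_eq_iff.2 ⟨hu.1, hlt⟩]
    ring
  · have hfract : Int.fract ((k : ℝ) + 1) = 0 := by
      rw [Int.fract_add_one, Int.fract_intCast]
    rw [arcProfile, hfract]
    ring

theorem arcProfile_two_mul_le (u : ℝ) : arcProfile (2 * u) ≤ 2 * arcProfile u := by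
  have hfloor := Int.floor_le u
  have hfloor' := (Int.lt_floor_add_one u).le
  rw [arcProfile_eq_of_mem_Icc ⟨hfloor, hfloor'⟩]
  rcases le_total (2 * u) (2 * ⌊u⌋ + 1) with hhalf | hhalf
  · rw [arcProfile_eq_of_mem_Icc (k := 2 * ⌊u⌋) ⟨by push_cast; linarith, by push_cast; linarith⟩]
    push_cast
    nlinarith [sq_nonneg (u - ⌊u⌋)]
  · rw [arcProfile_eq_of_mem_Icc (k := 2 * ⌊u⌋ + 1)
      ⟨by push_cast; linarith, by push_cast; linarith⟩]
    push_cast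
    nlinarith [sq_nonneg (⌊u⌋ + 1 - u)]

theorem exists_int_eq_of_arcProfile_eq_zero {u : ℝ} (hu : arcProfile u = 0) : ∃ k : ℤ, u = k := by
  have hfract : Int.fract u = 0 :=
    (mul_eq_zero.1 hu).resolve_right (sub_pos.2 (Int.fract_lt_one u)).ne'
  exact ⟨⌊u⌋, by rw [← Int.floor_add_fract u, hfract, add_zero, Int.floor_intCast]⟩

/-- The height above `x` of the arcs of level `n + 1`, that is of `⋃ j, Dnj (n + 1) j`. The index is
shifted so that these arcs have diameter `1 / 2 ^ n`. -/
def arcHeight (n : ℕ) (x : ℝ) : ℝ := √(arcProfile (2 ^ n * x)) / 2 ^ n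

theorem arcHeight_nonneg (n : ℕ) (x : ℝ) : 0 ≤ arcHeight n x := by
  unfold arcHeight
  positivity

theorem arcHeight_sq (n : ℕ) (x : ℝ) :
    arcHeight n x ^ 2 = arcProfile (2 ^ n * x) / (2 ^ n) ^ 2 := by
  rw [arcHeight, div_pow, Real.sq_sqrt (arcProfile_nonneg _)]

theorem two_mul_arcHeight_succ_sq_le (n : ℕ) (x : ℝ) :
    2 * arcHeight (n + 1) x ^ 2 ≤ arcHeight n x ^ 2 := by
  calc 2 * arcHeight (n + 1) x ^ 2 = arcProfile (2 * (2 ^ n * x)) / (2 * (2 ^ n) ^ 2) := by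
        rw [arcHeight_sq, show (2 : ℝ) ^ (n + 1) * x = 2 * (2 ^ n * x) by ring]
        field_simp
        ring
    _ ≤ 2 * arcProfile (2 ^ n * x) / (2 * (2 ^ n) ^ 2) := by
        gcongr
        exact arcProfile_two_mul_le _
    _ = arcHeight n x ^ 2 := by
        rw [arcHeight_sq, mul_div_mul_left _ _ two_ne_zero]

theorem arcHeight_antitone (x : ℝ) : Antitone fun n => arcHeight n x :=
  antitone_nat_of_succ_le fun n => by
    rw [← pow_le_pow_iff_left₀ (arcHeight_nonneg _ x) (arcHeight_nonneg _ x) two_ne_zero]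
    linarith [two_mul_arcHeight_succ_sq_le n x, sq_nonneg (arcHeight (n + 1) x)]

theorem arcHeight_succ_lt {n : ℕ} {x : ℝ} (hpos : 0 < arcHeight n x) :
    arcHeight (n + 1) x < arcHeight n x := by
  have hsq := pow_pos hpos 2
  exact lt_of_pow_lt_pow_left₀ 2 hpos.le (by linarith [two_mul_arcHeight_succ_sq_le n x])

theorem eq_of_arcHeight_succ_eq {n m : ℕ} {x : ℝ} (hn : 0 < arcHeight n x)
    (hm : 0 < arcHeight m x) (h : arcHeight (n + 1) x = arcHeight (m + 1) x) : n = m := by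
  wlog hnm : n ≤ m generalizing n m
  · exact (this hm hn h.symm (Nat.le_of_not_le hnm)).symm
  by_contra hne
  have hlt : arcHeight (m + 1) x < arcHeight (n + 1) x :=
    (arcHeight_succ_lt hm).trans_le (arcHeight_antitone x (Nat.lt_of_le_of_ne hnm hne))
  exact hlt.ne' h

theorem exists_int_eq_of_arcHeight_eq_zero {n : ℕ} {x : ℝ} (h : arcHeight n x = 0) :
    ∃ k : ℤ, 2 ^ n * x = k := by
  apply exists_int_eq_of_arcProfile_eq_zero
  have hsq := arcHeight_sq n x
  rw [h, zero_pow two_ne_zero, eq_comm, div_eq_zero_iff] at hsq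
  exact hsq.resolve_right (by positivity)

theorem snd_sq_mul_sq_of_mem_Dnj {n j : ℕ} {p : ℝ × ℝ} (hp : p ∈ Dnj (n + 1) j) :
    p.2 ^ 2 * (2 ^ n) ^ 2 = (2 ^ n * p.1 - (j - 1)) * (j - 2 ^ n * p.1) := by
  obtain ⟨hcircle, -⟩ := hp
  field_simp at hcircle
  linear_combination hcircle / 4

theorem two_pow_mul_fst_mem_Icc_of_mem_Dnj {n j : ℕ} {p : ℝ × ℝ} (hp : p ∈ Dnj (n + 1) j) :
    2 ^ n * p.1 ∈ Set.Icc ((j : ℝ) - 1) j := by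
  have hprod : 0 ≤ (2 ^ n * p.1 - ((j : ℝ) - 1)) * (j - 2 ^ n * p.1) :=
    (snd_sq_mul_sq_of_mem_Dnj hp).symm ▸ by positivity
  constructor <;> nlinarith

theorem snd_eq_arcHeight_of_mem_Dnj {n j : ℕ} {p : ℝ × ℝ} (hp : p ∈ Dnj (n + 1) j) :
    p.2 = arcHeight n p.1 := by
  obtain ⟨hlower, hupper⟩ := two_pow_mul_fst_mem_Icc_of_mem_Dnj hp
  have hprofile : arcProfile (2 ^ n * p.1) = (2 ^ n * p.1 - (j - 1)) * (j - 2 ^ n * p.1) := by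
    rw [arcProfile_eq_of_mem_Icc (k := (j : ℤ) - 1)
      ⟨by push_cast; linarith, by push_cast; linarith⟩]
    push_cast
    ring
  refine (pow_left_inj₀ hp.2 (arcHeight_nonneg n p.1) two_ne_zero).1 ?_
  rw [arcHeight_sq, hprofile, ← snd_sq_mul_sq_of_mem_Dnj hp]
  field_simp

theorem fst_mem_Icc_of_mem_Dnj {n j : ℕ} (hj : 1 ≤ j) (hj' : j ≤ 2 ^ n) {p : ℝ × ℝ}
    (hp : p ∈ Dnj (n + 1) j) : p.1 ∈ Set.Icc (0 : ℝ) 1 := by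
  obtain ⟨hlower, hupper⟩ := two_pow_mul_fst_mem_Icc_of_mem_Dnj hp
  have hpow : (0 : ℝ) < 2 ^ n := by positivity
  have hj_one : (1 : ℝ) ≤ j := by exact_mod_cast hj
  have hj_pow : (j : ℝ) ≤ 2 ^ n := by exact_mod_cast hj'
  exact ⟨nonneg_of_mul_nonneg_right (by linarith) hpow, by nlinarith⟩

theorem exists_mem_Dnj_of_notMem_B2 {p : DD} (hp : (p : ℝ × ℝ) ∉ B2) :
    ∃ n j : ℕ, 1 ≤ j ∧ j ≤ 2 ^ n ∧ (p : ℝ × ℝ) ∈ Dnj (n + 1) j := by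
  have harc := p.2.resolve_left hp
  simp only [Set.mem_iUnion] at harc
  obtain ⟨n, hn, j, hj, hj', hmem⟩ := harc
  obtain ⟨n, rfl⟩ := Nat.exists_eq_add_of_le' hn
  exact ⟨n, j, hj, hj', hmem⟩

/-- The base segment `B2` as a subset of the dyadic arc space. -/
def baseSegment : Set DD := Subtype.val ⁻¹' B2

/-- The points of the base of the dyadic arc space whose first coordinate is a dyadic rational. -/
def dyadicBase : Set DD := {p | p.1.2 = 0 ∧ ∃ (n : ℕ) (k : ℤ), 2 ^ n * p.1.1 = k}

theorem countable_dyadicBase : dyadicBase.Countable := by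
  let dyadicPoint : ℕ × ℤ → ℝ × ℝ := fun v => (v.2 / 2 ^ v.1, 0)
  refine ((Set.countable_range dyadicPoint).preimage Subtype.val_injective).mono ?_
  rintro p ⟨hsnd, n, k, hfst⟩
  refine ⟨(n, k), Prod.ext ?_ hsnd.symm⟩
  simp only [dyadicPoint, ← hfst]
  field_simp

namespace IsShiftMap

variable {f : DD → DD}

theorem exists_arcHeight_of_notMem_baseSegment (hs : IsShiftMap f) {p : DD}
    (hp : p ∉ baseSegment) :
    ∃ n, 0 < arcHeight n p.1.1 ∧ p.1.2 = arcHeight n p.1.1 ∧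
      (f p).1 = (p.1.1, arcHeight (n + 1) p.1.1) := by
  obtain ⟨n, j, hj, hj', hmem⟩ := exists_mem_Dnj_of_notMem_B2 hp
  have hsnd : p.1.2 = arcHeight n p.1.1 := snd_eq_arcHeight_of_mem_Dnj hmem
  have hne : p.1.2 ≠ 0 := fun h0 => hp ⟨fst_mem_Icc_of_mem_Dnj hj hj' hmem, h0⟩
  obtain ⟨hfst, himage⟩ := hs.2 (n + 1) j n.succ_pos hj hj' p hmem
  have hheight : (f p).1.2 = arcHeight (n + 1) (f p).1.1 :=
    himage.elim snd_eq_arcHeight_of_mem_Dnj snd_eq_arcHeight_of_mem_Dnj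
  exact ⟨n, hsnd ▸ hmem.2.lt_of_ne' hne, hsnd, Prod.ext hfst (hfst ▸ hheight)⟩

theorem injOn_baseSegment (hs : IsShiftMap f) : Set.InjOn f baseSegment := by
  intro p hp q hq h
  rwa [hs.1 p hp, hs.1 q hq] at h

theorem injOn_compl_baseSegment (hs : IsShiftMap f) : Set.InjOn f baseSegmentᶜ := by
  intro p hp q hq h
  obtain ⟨n, hn, hp_snd, hfp⟩ := hs.exists_arcHeight_of_notMem_baseSegment hp
  obtain ⟨m, hm, hq_snd, hfq⟩ := hs.exists_arcHeight_of_notMem_baseSegment hq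
  rw [h, hfq, Prod.mk.injEq] at hfp
  obtain ⟨hfst, hheight⟩ := hfp
  rw [hfst] at hm hq_snd hheight
  obtain rfl := eq_of_arcHeight_succ_eq hn hm hheight.symm
  exact Subtype.ext (Prod.ext hfst.symm (hp_snd.trans hq_snd.symm))

theorem image_baseSegment_inter_image_compl_subset (hs : IsShiftMap f) :
    f '' baseSegment ∩ f '' baseSegmentᶜ ⊆ dyadicBase := by
  rintro _ ⟨⟨p, hp, rfl⟩, q, hq, hqp⟩
  obtain ⟨n, -, -, hfq⟩ := hs.exists_arcHeight_of_notMem_baseSegment hq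
  rw [hs.1 p hp] at hqp ⊢
  rw [hqp] at hfq
  have hsnd : p.1.2 = 0 := hp.2
  have hzero : arcHeight (n + 1) p.1.1 = 0 := by
    rw [← hsnd, hfq]
  exact ⟨hsnd, n + 1, exists_int_eq_of_arcHeight_eq_zero hzero⟩

theorem finite_preimage_singleton (hs : IsShiftMap f) (c : DD) : (f ⁻¹' {c}).Finite :=
  finite_preimage_singleton_of_injOn_of_injOn_compl hs.injOn_baseSegment
    hs.injOn_compl_baseSegment c

theorem isTotallyDisconnected_setOf_nontrivial_preimage (hs : IsShiftMap f) :
    IsTotallyDisconnected {c | (f ⁻¹' {c}).Nontrivial} :=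
  (countable_dyadicBase.mono fun _ hc => hs.image_baseSegment_inter_image_compl_subset <|
    mem_image_inter_image_compl_of_nontrivial_preimage hs.injOn_baseSegment
      hs.injOn_compl_baseSegment hc).isTotallyDisconnected

end IsShiftMap

theorem statement5_general {T : Type*} [TopologicalSpace T] [PreconnectedSpace T]
    [LocallyConnectedSpace T] {f : DD → DD} (hs : IsShiftMap f) (α : C(T, DD))
    (hnc : ¬ ∃ c, ∀ t, α t = c) (β₁ β₂ : C(T, DD)) (h₁ : ∀ t, f (β₁ t) = α t)
    (h₂ : ∀ t, f (β₂ t) = α t) : β₁ = β₂ :=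
  DFunLike.coe_injective <| lift_unique_of_isTotallyDisconnected hs.finite_preimage_singleton
    hs.isTotallyDisconnected_setOf_nontrivial_preimage α.continuous hnc β₁.continuous
    β₂.continuous h₁ h₂

/-- Let `α : [0,1] → 𝔻` be a nonconstant path. If `β₁, β₂` are paths with
`f ∘ β₁ = α = f ∘ β₂`, where `f` is the shift map, then `β₁ = β₂`. -/
theorem statement5 (f : DD → DD) (hf : Continuous f) (hs : IsShiftMap f)
    (α : C(I, DD)) (hnc : ¬ ∃ c, ∀ t, α t = c)
    (β₁ β₂ : C(I, DD)) (h₁ : ∀ t, f (β₁ t) = α t) (h₂ : ∀ t, f (β₂ t) = α t) :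
    β₁ = β₂ := by
  have : LocallyPathConnectedSpace I := (convex_Icc (0 : ℝ) 1).locallyPathConnectedSpace
  exact statement5_general hs α hnc β₁ β₂ h₁ h₂

end
end

section
/- Let X be a metric space and let α : [a₀,b₀] → X be a non-constant reduced path. If [a₁,b₁] ⊆ [a₀,b₀] and α ≡ α|_{[a₁,b₁]} (i.e., α is equivalent to its restriction to [a₁,b₁]), then [a₁,b₁] = [a₀,b₀]. -/
open scoped unitInterval

noncomputable section

/-- The affine subpath of `α : C([a,b], X)` from `s` to `t`, as a `Path`. -/
def subPath {X : Type*} [TopologicalSpace X] {a b : ℝ} (α : C(Set.Icc a b, X))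
    (s t : Set.Icc a b) (hst : (s : ℝ) ≤ (t : ℝ)) : Path (α s) (α t) where
  toFun u := α ⟨(1 - (u : ℝ)) * (s : ℝ) + (u : ℝ) * (t : ℝ),
    ⟨le_trans s.2.1 (by nlinarith [u.2.1, u.2.2]),
     le_trans (by nlinarith [u.2.1, u.2.2]) t.2.2⟩⟩
  continuous_toFun := by
    apply α.continuous.comp; apply Continuous.subtype_mk; fun_prop
  source' := by apply congrArg α; apply Subtype.ext; simp
  target' := by apply congrArg α; apply Subtype.ext; simp

/-- A path `α : [a,b] → X` is *reduced* if it is constant or if for all `s < t` with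
`α(s) = α(t)`, the loop `α|_{[s,t]}` is not null-homotopic. -/
def IsReducedOn {X : Type*} [TopologicalSpace X] {a b : ℝ} (α : C(Set.Icc a b, X)) : Prop :=
  (∃ c, ∀ u, α u = c) ∨
  ∀ (s t : Set.Icc a b) (hst : (s : ℝ) < (t : ℝ)) (he : α s = α t),
    ¬ ((subPath α s t hst.le).cast rfl he).Homotopic (Path.refl (α s))

/-- Equivalence (`≡`) of paths on intervals: equality up to an increasing homeomorphism of
the parameter intervals. -/
def PathEquivOn {X : Type*} [TopologicalSpace X] {a b c d : ℝ}
    (α : C(Set.Icc a b, X)) (β : C(Set.Icc c d, X)) : Prop :=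
  ∃ γ : Set.Icc a b ≃ₜ Set.Icc c d, StrictMono (fun u => γ u) ∧ ∀ u, α u = β (γ u)

/-- Restriction of `α : C([a,b], X)` to the subinterval `[c,d]` (via clamping; for
`[c,d] ⊆ [a,b]` this is the restriction `α|_{[c,d]}`). -/
def resIcc {X : Type*} [TopologicalSpace X] {a b : ℝ} (α : C(Set.Icc a b, X)) (hab : a ≤ b)
    (c d : ℝ) : C(Set.Icc c d, X) :=
  α.comp ⟨fun u => Set.projIcc a b hab (u : ℝ), continuous_projIcc.comp continuous_subtype_val⟩

/-- The reverse of a path on `[c,d]`. -/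
def reverseIcc {X : Type*} [TopologicalSpace X] {c d : ℝ} (β : C(Set.Icc c d, X)) :
    C(Set.Icc c d, X) :=
  ⟨fun u => β ⟨c + d - (u : ℝ), ⟨by linarith [u.2.1, u.2.2], by linarith [u.2.1, u.2.2]⟩⟩,
    β.continuous.comp (by apply Continuous.subtype_mk; fun_prop)⟩

/-- The path `α : [a,b] → X` reparametrized affinely as a `Path` on `[0,1]`. -/
def toPathIcc {X : Type*} [TopologicalSpace X] {a b : ℝ} (hab : a ≤ b)
    (α : C(Set.Icc a b, X)) :
    Path (α ⟨a, Set.left_mem_Icc.mpr hab⟩) (α ⟨b, Set.right_mem_Icc.mpr hab⟩) :=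
  subPath α _ _ hab

/-!
If a non-constant reduced path `α` on `[a, b]` satisfies `α ∘ g = α` for a monotone self-map `g` of
`[a, b]`, then `g = id`. Indeed, if `g c ≠ c`, both `gⁿ c` and `gⁿ (g c)` converge to the same point
`p`, and squeezing gives `gⁿ x → p` for every `x` between `c` and `g c`. As `α (gⁿ x) = α x` for all
`n`, continuity puts `α x` in every neighbourhood of `α p`. In a Hausdorff space this makes `α`
constant between `c` and `g c`; in general, the points specializing to `α p` form a contractible
subspace, so the loop of `α` between `c` and `g c` is null-homotopic anyway, contradicting
reducedness. An equivalence of `α` with its restriction to `[a₁, b₁]` provides such a `g`, with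
values in `[a₁, b₁]`.
-/

open Set Filter Function Topology

section Specialization

variable {X Y : Type*} [TopologicalSpace X] [TopologicalSpace Y]

theorem homotopic_of_forall_specializes {f g : C(X, Y)} (h : ∀ x, f x ⤳ g x) :
    f.Homotopic g := by
  classical
  let final : Set (I × X) := {q | q.1 = 1}
  have hfinal : IsClosed final := isClosed_singleton.preimage continuous_fst
  exact ⟨{
    toFun := final.piecewise (fun q ↦ g q.2) (fun q ↦ f q.2)
    continuous_toFun := hfinal.continuous_piecewise_of_specializes (by fun_prop) (by fun_prop)
      fun q ↦ h q.2
    map_zero_left := fun x ↦ piecewise_eq_of_notMem _ _ _ zero_ne_one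
    map_one_left := fun x ↦ piecewise_eq_of_mem _ _ _ rfl }⟩

theorem contractibleSpace_of_forall_specializes {z : X} (h : ∀ x, x ⤳ z) :
    ContractibleSpace X :=
  (contractible_iff_id_nullhomotopic X).mpr ⟨z, homotopic_of_forall_specializes h⟩

theorem path_homotopic_of_forall_specializes {x y z : X} {p q : Path x y}
    (hp : ∀ u, p u ⤳ z) (hq : ∀ u, q u ⤳ z) : p.Homotopic q := by
  let S : Set X := {w | w ⤳ z}
  have : ContractibleSpace S :=
    contractibleSpace_of_forall_specializes (z := ⟨z, specializes_rfl⟩)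
      fun w ↦ (subtype_specializes_iff _ _).mpr w.2
  let lift (r : Path x y) (hr : ∀ u, r u ⤳ z) :
      Path (⟨x, r.source ▸ hr 0⟩ : S) ⟨y, r.target ▸ hr 1⟩ :=
    { toFun := fun u ↦ ⟨r u, hr u⟩
      source' := Subtype.ext r.source
      target' := Subtype.ext r.target }
  exact (SimplyConnectedSpace.paths_homotopic (lift p hp) (lift q hq)).map
    ⟨Subtype.val, continuous_subtype_val⟩

theorem specializes_of_tendsto_iterate {f : X → X} {α : X → Y} (hf : α ∘ f = α) {x p : X}
    (hα : ContinuousAt α p) (hx : Tendsto (fun n ↦ f^[n] x) atTop (𝓝 p)) : α x ⤳ α p := by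
  have hconst : ∀ n, α (f^[n] x) = α x := fun n ↦ congrFun (iterate_invariant hf n) x
  have hlim : Tendsto (fun _ : ℕ ↦ α x) atTop (𝓝 (α p)) := by
    simpa only [comp_def, hconst] using hα.tendsto.comp hx
  rwa [Tendsto, Filter.map_const, ← specializes_iff_pure] at hlim

end Specialization

section MonotoneIteration

variable {Y : Type*} [LinearOrder Y] [TopologicalSpace Y] [OrderTopology Y]

theorem exists_tendsto_atTop_of_monotone [CompactSpace Y] {ι : Type*} [Preorder ι] [Nonempty ι]
    {u : ι → Y} (hu : Monotone u) : ∃ p, Tendsto u atTop (𝓝 p) := by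
  obtain ⟨p, -, hp⟩ :=
    (isClosed_closure (s := range u)).isCompact.exists_isLUB (range_nonempty u).closure
  exact ⟨p, tendsto_atTop_isLUB hu ((isLUB_congr (upperBounds_closure _)).mp hp)⟩

theorem exists_tendsto_iterate_of_monotone [CompactSpace Y] {f : Y → Y} (hf : Monotone f)
    (c : Y) : ∃ p, Tendsto (fun n ↦ f^[n] c) atTop (𝓝 p) := by
  rcases le_total c (f c) with hle | hle
  · exact exists_tendsto_atTop_of_monotone (hf.monotone_iterate_of_le_map hle)
  · have : CompactSpace Yᵒᵈ := ‹CompactSpace Y›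
    exact exists_tendsto_atTop_of_monotone (Y := Yᵒᵈ) (hf.antitone_iterate_of_map_le hle)

theorem tendsto_iterate_of_mem_uIcc {f : Y → Y} (hf : Monotone f) {a b p x : Y}
    (ha : Tendsto (fun n ↦ f^[n] a) atTop (𝓝 p)) (hb : Tendsto (fun n ↦ f^[n] b) atTop (𝓝 p))
    (hx : x ∈ uIcc a b) : Tendsto (fun n ↦ f^[n] x) atTop (𝓝 p) :=
  (ha.uIcc hb).of_smallSets (.of_forall fun n ↦ (hf.iterate n).mapsTo_uIcc hx)

theorem exists_forall_mem_uIcc_specializes [CompactSpace Y] {X : Type*} [TopologicalSpace X]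
    {f : Y → Y} (hf : Monotone f) {α : Y → X} (hα : Continuous α) (hinv : α ∘ f = α) (c : Y) :
    ∃ z, ∀ x ∈ uIcc c (f c), α x ⤳ z := by
  obtain ⟨p, hc⟩ := exists_tendsto_iterate_of_monotone hf c
  have hfc : Tendsto (fun n ↦ f^[n] (f c)) atTop (𝓝 p) := hc.comp (tendsto_add_atTop_nat 1)
  exact ⟨α p, fun x hx ↦ specializes_of_tendsto_iterate hinv hα.continuousAt
    (tendsto_iterate_of_mem_uIcc hf hc hfc hx)⟩

end MonotoneIteration

section ReducedPaths

variable {X : Type*} [TopologicalSpace X] {a b : ℝ}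

theorem subPath_mem_image_Icc (α : C(Icc a b, X)) {s t : Icc a b} (hst : s ≤ t) (u : I) :
    subPath α s t hst u ∈ α '' Icc s t := by
  have hcomb : (1 - (u : ℝ)) * s + u * t ∈ Icc (s : ℝ) t :=
    convex_Icc (s : ℝ) t (left_mem_Icc.mpr hst) (right_mem_Icc.mpr hst)
      (sub_nonneg.mpr u.2.2) u.2.1 (sub_add_cancel 1 (u : ℝ))
  exact ⟨_, hcomb, rfl⟩

theorem IsReducedOn.not_forall_specializes {α : C(Icc a b, X)} (hred : IsReducedOn α)
    (hnc : ¬ ∃ c, ∀ u, α u = c) {s t : Icc a b} (hst : s < t) (he : α s = α t) (z : X) :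
    ¬ ∀ x ∈ Icc s t, α x ⤳ z := by
  intro hz
  refine hred.resolve_left hnc s t hst he (path_homotopic_of_forall_specializes (z := z) ?_ ?_)
  · intro u
    obtain ⟨x, hx, hxu⟩ := subPath_mem_image_Icc α hst.le u
    exact hxu ▸ hz x hx
  · exact fun _ ↦ hz s (left_mem_Icc.mpr hst.le)

theorem IsReducedOn.eq_id_of_comp_eq {α : C(Icc a b, X)} (hred : IsReducedOn α)
    (hnc : ¬ ∃ c, ∀ u, α u = c) {g : Icc a b → Icc a b} (hg : Monotone g) (hinv : α ∘ g = α) :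
    g = id := by
  funext c
  obtain ⟨z, hz⟩ := exists_forall_mem_uIcc_specializes hg α.continuous hinv c
  have hgc : α (g c) = α c := congrFun hinv c
  rcases lt_trichotomy (g c) c with hlt | heq | hgt
  · exact absurd (uIcc_of_ge hlt.le ▸ hz) (hred.not_forall_specializes hnc hlt hgc z)
  · exact heq
  · exact absurd (uIcc_of_le hgt.le ▸ hz) (hred.not_forall_specializes hnc hgt hgc.symm z)

theorem PathEquivOn.exists_monotone_comp_eq {c d a₁ b₁ : ℝ} {hab : a ≤ b} {α : C(Icc a b, X)}
    {β : C(Icc c d, X)} (h : PathEquivOn β (resIcc α hab a₁ b₁)) (ha : a ≤ a₁) (hb : b₁ ≤ b) :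
    ∃ g : Icc c d → Icc a b, Monotone g ∧ α ∘ g = β ∧ ∀ x, (g x : ℝ) ∈ Icc a₁ b₁ := by
  obtain ⟨γ, hγ, hβ⟩ := h
  refine ⟨fun x ↦ inclusion (Icc_subset_Icc ha hb) (γ x), fun x y hxy ↦ hγ.monotone hxy, ?_,
    fun x ↦ (γ x).2⟩
  funext x
  rw [hβ x]
  exact congrArg α (projIcc_of_mem hab (Icc_subset_Icc ha hb (γ x).2)).symm

end ReducedPaths

theorem statement6_general {X : Type*} [TopologicalSpace X] {a₀ b₀ : ℝ} (hab : a₀ ≤ b₀)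
    (α : C(Icc a₀ b₀, X)) (hred : IsReducedOn α) (hnc : ¬ ∃ c, ∀ u, α u = c)
    (a₁ b₁ : ℝ) (h₁ : a₀ ≤ a₁) (h₃ : b₁ ≤ b₀) (heq : PathEquivOn α (resIcc α hab a₁ b₁)) :
    a₁ = a₀ ∧ b₁ = b₀ := by
  obtain ⟨g, hg, hinv, hmem⟩ := heq.exists_monotone_comp_eq h₁ h₃
  obtain rfl : g = id := hred.eq_id_of_comp_eq hnc hg hinv
  exact ⟨(hmem ⟨a₀, left_mem_Icc.mpr hab⟩).1.antisymm h₁,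
    h₃.antisymm (hmem ⟨b₀, right_mem_Icc.mpr hab⟩).2⟩

/-- If `α : [a₀,b₀] → X` is a non-constant reduced path in a metric space
`X` and `[a₁,b₁] ⊆ [a₀,b₀]` with `α ≡ α|_{[a₁,b₁]}`, then `[a₁,b₁] = [a₀,b₀]`. -/
theorem statement6 {X : Type*} [MetricSpace X] {a₀ b₀ : ℝ} (hab : a₀ ≤ b₀)
    (α : C(Set.Icc a₀ b₀, X)) (hred : IsReducedOn α) (hnc : ¬ ∃ c, ∀ u, α u = c)
    (a₁ b₁ : ℝ) (h₁ : a₀ ≤ a₁) (h₂ : a₁ ≤ b₁) (h₃ : b₁ ≤ b₀)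
    (heq : PathEquivOn α (resIcc α hab a₁ b₁)) :
    a₁ = a₀ ∧ b₁ = b₀ := by
  exact statement6_general hab α hred hnc a₁ b₁ h₁ h₃ heq

end
end
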